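/- Let n ≥ 2 be an integer. Then the group of affine permutations of the ring ℤ/nℤ contains a cross-commuting nonabelian square if and only if n is neither a prime power nor twice an odd prime power (i.e., n is not of the form p^e for a prime p and e ≥ 1, and n is not of the form 2·q^e for an odd prime q and e ≥ 1). -/

import Mathlib

/-- Two self-maps of a type commute under composition. -/
def MapsCommute {α : Type*} (f g : α → α) : Prop :=
  f ∘ g = g ∘ f

/-- `f : R → R` is an affine permutation: `x ↦ a·x + b` with `a` a unit of `R`. -/
def IsAffinePerm {R : Type*} [CommRing R] (f : R → R) : Prop :=
  ∃ a : Rˣ, ∃ b : R, ∀ x, f x = (a : R) * x + b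

/-- A cross-commuting nonabelian square exists in the affine permutation group of `R`. -/
def HasCrossCommutingNonabelianSquare (R : Type*) [CommRing R] : Prop :=
  ∃ F₀ F₁ G₀ G₁ : R → R,
    IsAffinePerm F₀ ∧ IsAffinePerm F₁ ∧ IsAffinePerm G₀ ∧ IsAffinePerm G₁ ∧
    MapsCommute F₀ G₀ ∧ MapsCommute F₀ G₁ ∧ MapsCommute F₁ G₀ ∧ MapsCommute F₁ G₁ ∧
    ¬ MapsCommute F₀ F₁ ∧ ¬ MapsCommute G₀ G₁

/-- Commutation of affine maps is the vanishing of a determinant. -/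
theorem affine_commute_iff {R : Type*} [CommRing R] {f g : R → R} {a b c d : R}
    (hf : ∀ x, f x = a * x + b) (hg : ∀ x, g x = c * x + d) :
    MapsCommute f g ↔ (a - 1) * d = (c - 1) * b := by
  unfold MapsCommute
  constructor
  · intro h
    have h0 := congrFun h 0
    simp only [Function.comp, hf, hg] at h0
    linear_combination h0
  · intro h
    funext x
    simp only [Function.comp, hf, hg]
    linear_combination h

/-- If one of the coordinates of `F₀` divides the coordinates of `G₀, G₁`, the latter commute. -/
theorem det_zero_of_dvd {S : Type*} [CommRing S] {α b c₀ d₀ c₁ d₁ : S}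
    (hb : α ∣ b) (h0 : α ∣ c₀) (h1 : α ∣ c₁)
    (e0 : α * d₀ = c₀ * b) (e1 : α * d₁ = c₁ * b) : c₀ * d₁ = c₁ * d₀ := by
  obtain ⟨t, rfl⟩ := hb
  obtain ⟨s, rfl⟩ := h0
  obtain ⟨r, rfl⟩ := h1
  linear_combination s * e1 - r * e0

theorem chain_no_square {S : Type*} [CommRing S] (tot : ∀ x y : S, x ∣ y ∨ y ∣ x)
    {a₀ b₀ a₁ b₁ c₀ d₀ c₁ d₁ : S}
    (e00 : a₀ * d₀ = c₀ * b₀) (e01 : a₀ * d₁ = c₁ * b₀)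
    (e10 : a₁ * d₀ = c₀ * b₁) (e11 : a₁ * d₁ = c₁ * b₁) :
    a₀ * b₁ = a₁ * b₀ ∨ c₀ * d₁ = c₁ * d₀ := by
  have key : ∀ x y : S, ∃ z, (z = x ∨ z = y) ∧ z ∣ x ∧ z ∣ y := by
    intro x y
    rcases tot x y with h | h
    · exact ⟨x, Or.inl rfl, dvd_rfl, h⟩
    · exact ⟨y, Or.inr rfl, h, dvd_rfl⟩
  obtain ⟨u₀, hu₀, p1, p2⟩ := key a₀ b₀
  obtain ⟨u₁, hu₁, p3, p4⟩ := key a₁ b₁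
  obtain ⟨v₀, hv₀, q1, q2⟩ := key c₀ d₀
  obtain ⟨v₁, hv₁, q3, q4⟩ := key c₁ d₁
  obtain ⟨u, hu, r1, r2⟩ := key u₀ u₁
  obtain ⟨v, hv, s1, s2⟩ := key v₀ v₁
  have ha0 := r1.trans p1
  have hb0 := r1.trans p2
  have ha1 := r2.trans p3
  have hb1 := r2.trans p4
  have hc0 := s1.trans q1
  have hd0 := s1.trans q2
  have hc1 := s2.trans q3
  have hd1 := s2.trans q4
  rcases tot u v with h | h
  · right
    have hc0 := h.trans hc0
    have hd0 := h.trans hd0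
    have hc1 := h.trans hc1
    have hd1 := h.trans hd1
    have hu' : u = a₀ ∨ u = b₀ ∨ u = a₁ ∨ u = b₁ := by
      rcases hu with rfl | rfl
      · tauto
      · tauto
    rcases hu' with rfl | rfl | rfl | rfl
    · exact det_zero_of_dvd hb0 hc0 hc1 e00 e01
    · linear_combination -det_zero_of_dvd ha0 hd0 hd1
        (show _ * c₀ = d₀ * a₀ by linear_combination -e00) (show _ * c₁ = d₁ * a₀ by linear_combination -e01)
    · exact det_zero_of_dvd hb1 hc0 hc1 e10 e11
    · linear_combination -det_zero_of_dvd ha1 hd0 hd1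
        (show _ * c₀ = d₀ * a₁ by linear_combination -e10) (show _ * c₁ = d₁ * a₁ by linear_combination -e11)
  · left
    have ha0 := h.trans ha0
    have hb0 := h.trans hb0
    have ha1 := h.trans ha1
    have hb1 := h.trans hb1
    have hv' : v = c₀ ∨ v = d₀ ∨ v = c₁ ∨ v = d₁ := by
      rcases hv with rfl | rfl
      · tauto
      · tauto
    rcases hv' with rfl | rfl | rfl | rfl
    · exact det_zero_of_dvd hd0 ha0 ha1 e00.symm e10.symm
    · linear_combination -det_zero_of_dvd hc0 hb0 hb1
        (show _ * a₀ = b₀ * c₀ by linear_combination e00) (show _ * a₁ = b₁ * c₀ by linear_combination e10)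
    · exact det_zero_of_dvd hd1 ha0 ha1 e01.symm e11.symm
    · linear_combination -det_zero_of_dvd hc1 hb0 hb1
        (show _ * a₀ = b₀ * c₁ by linear_combination e01) (show _ * a₁ = b₁ * c₁ by linear_combination e11)

/-- Divisibility is total in `ℤ/p^e`. -/
theorem zmod_primePow_total (p e : ℕ) (hp : p.Prime) (x y : ZMod (p ^ e)) : x ∣ y ∨ y ∣ x := by
  have : NeZero (p ^ e) := ⟨pow_ne_zero _ hp.ne_zero⟩
  have key : ∀ x : ZMod (p ^ e), ∃ i : ℕ, (p : ZMod (p ^ e)) ^ i ∣ x ∧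
      x ∣ (p : ZMod (p ^ e)) ^ i := by
    intro x
    obtain ⟨i, -, hi⟩ := (Nat.dvd_prime_pow hp).1 (Nat.gcd_dvd_right x.val (p ^ e))
    refine ⟨i, ?_, ?_⟩
    · have h : p ^ i ∣ x.val := hi ▸ Nat.gcd_dvd_left _ _
      obtain ⟨k, hk⟩ := h
      refine ⟨k, ?_⟩
      rw [← ZMod.natCast_zmod_val x, hk]
      push_cast
      rfl
    · have h := Nat.gcd_eq_gcd_ab x.val (p ^ e)
      rw [hi] at h
      have h' := congrArg (Int.cast : ℤ → ZMod (p ^ e)) h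
      have hz : (p : ZMod (p ^ e)) ^ e = 0 := by
        rw [← Nat.cast_pow]; exact ZMod.natCast_self _
      push_cast at h'
      rw [ZMod.natCast_zmod_val, hz, zero_mul, add_zero] at h'
      exact ⟨_, h'⟩
  obtain ⟨i, hi, hi'⟩ := key x
  obtain ⟨j, hj, hj'⟩ := key y
  rcases le_total i j with h | h
  · exact Or.inl (hi'.trans ((pow_dvd_pow _ h).trans hj))
  · exact Or.inr (hj'.trans ((pow_dvd_pow _ h).trans hi))

/-- Transfer of non-existence along a ring map to a chain ring which detects determinants. -/
theorem no_square_of_hom {R S : Type*} [CommRing R] [CommRing S] (φ : R →+* S)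
    (tot : ∀ x y : S, x ∣ y ∨ y ∣ x)
    (inj : ∀ (a c : Rˣ) (b d : R),
      φ (((a : R) - 1) * d) = φ (((c : R) - 1) * b) → ((a : R) - 1) * d = ((c : R) - 1) * b) :
    ¬ HasCrossCommutingNonabelianSquare R := by
  rintro ⟨F₀, F₁, G₀, G₁, ⟨a₀, b₀, hF₀⟩, ⟨a₁, b₁, hF₁⟩, ⟨c₀, d₀, hG₀⟩, ⟨c₁, d₁, hG₁⟩,
    e00, e01, e10, e11, nF, nG⟩
  rw [affine_commute_iff hF₀ hG₀] at e00
  rw [affine_commute_iff hF₀ hG₁] at e01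
  rw [affine_commute_iff hF₁ hG₀] at e10
  rw [affine_commute_iff hF₁ hG₁] at e11
  rw [affine_commute_iff hF₀ hF₁] at nF
  rw [affine_commute_iff hG₀ hG₁] at nG
  have e00 := congrArg φ e00
  have e01 := congrArg φ e01
  have e10 := congrArg φ e10
  have e11 := congrArg φ e11
  rw [map_mul, map_mul] at e00 e01 e10 e11
  rcases chain_no_square tot e00 e01 e10 e11 with h | h
  · exact nF (inj _ _ _ _ (by rw [map_mul, map_mul]; exact h))
  · exact nG (inj _ _ _ _ (by rw [map_mul, map_mul]; exact h))

theorem no_square_two_mul (q e : ℕ) (hq : q.Prime) (ho : Odd q) :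
    ¬ HasCrossCommutingNonabelianSquare (ZMod (2 * q ^ e)) := by
  have : NeZero (2 * q ^ e) := ⟨mul_ne_zero two_ne_zero (pow_ne_zero _ hq.ne_zero)⟩
  let φ : ZMod (2 * q ^ e) →+* ZMod (q ^ e) := ZMod.castHom (dvd_mul_left _ _) _
  let ψ : ZMod (2 * q ^ e) →+* ZMod 2 := ZMod.castHom (dvd_mul_right _ _) _
  refine no_square_of_hom φ (zmod_primePow_total q e hq) ?_
  intro a c b d h
  have hu : ∀ a : (ZMod (2 * q ^ e))ˣ, ψ ((a : ZMod (2 * q ^ e)) - 1) = 0 := by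
    intro a
    have h2 : ∀ u : (ZMod 2)ˣ, (u : ZMod 2) - 1 = 0 := by decide
    have := h2 (Units.map (ψ : ZMod (2 * q ^ e) →* ZMod 2) a)
    rw [map_sub, map_one]
    exact this
  have hdet : ∀ x : ZMod (2 * q ^ e), φ x = 0 → ψ x = 0 → x = 0 := by
    intro x h1 h2
    rw [← ZMod.natCast_zmod_val x] at h1 h2 ⊢
    rw [map_natCast, ZMod.natCast_eq_zero_iff] at h1 h2
    rw [ZMod.natCast_eq_zero_iff]
    exact Nat.Coprime.mul_dvd_of_dvd_of_dvd
      (Nat.Coprime.pow_right _ (Nat.coprime_two_left.2 ho)) h2 h1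
  rw [← sub_eq_zero]
  apply hdet
  · rw [map_sub, h, sub_self]
  · rw [map_sub, map_mul, map_mul, hu, hu]; simp

theorem square_of_idem {R : Type*} [CommRing R] (e f : R) (hs : e + f = 1) (hef : e * f = 0)
    (he : 2 * e ≠ 0) (hf : 2 * f ≠ 0) : HasCrossCommutingNonabelianSquare R := by
  have hee : e * e = e := by linear_combination e * hs - hef
  have hff : f * f = f := by linear_combination f * hs - hef
  let ue : Rˣ := ⟨1 - 2 * e, 1 - 2 * e, by linear_combination 4 * hee,
    by linear_combination 4 * hee⟩
  let uf : Rˣ := ⟨1 - 2 * f, 1 - 2 * f, by linear_combination 4 * hff,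
    by linear_combination 4 * hff⟩
  have h1 : ∀ x, (fun x : R => (1 - 2 * e) * x + 0) x = (1 - 2 * e) * x + 0 := fun _ => rfl
  have h2 : ∀ x, (fun x : R => 1 * x + e) x = 1 * x + e := fun _ => rfl
  have h3 : ∀ x, (fun x : R => (1 - 2 * f) * x + 0) x = (1 - 2 * f) * x + 0 := fun _ => rfl
  have h4 : ∀ x, (fun x : R => 1 * x + f) x = 1 * x + f := fun _ => rfl
  refine ⟨_, _, _, _, ⟨ue, 0, h1⟩, ⟨1, e, h2⟩, ⟨uf, 0, h3⟩, ⟨1, f, h4⟩, ?_, ?_, ?_, ?_, ?_, ?_⟩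
  · rw [affine_commute_iff h1 h3]; ring
  · rw [affine_commute_iff h1 h4]; linear_combination -2 * hef
  · rw [affine_commute_iff h2 h3]; linear_combination 2 * hef
  · rw [affine_commute_iff h2 h4]; ring
  · rw [affine_commute_iff h1 h2]
    intro h
    exact he (by linear_combination -h - 2 * hee)
  · rw [affine_commute_iff h3 h4]
    intro h
    exact hf (by linear_combination -h - 2 * hff)

theorem square_of_coprime (u v : ℕ) (hu : 3 ≤ u) (hv : 3 ≤ v) (huv : u.Coprime v) :
    HasCrossCommutingNonabelianSquare (ZMod (u * v)) := by
  let φ := ZMod.chineseRemainder huv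
  have two : ∀ m : ℕ, 3 ≤ m → (2 : ZMod m) ≠ 0 := by
    intro m hm h
    have h' : ((2 : ℕ) : ZMod m) = 0 := by exact_mod_cast h
    rw [ZMod.natCast_eq_zero_iff] at h'
    have := Nat.le_of_dvd (by norm_num) h'
    omega
  refine square_of_idem (φ.symm (1, 0)) (φ.symm (0, 1)) ?_ ?_ ?_ ?_
  · rw [← map_add]; simp [← Prod.one_eq_mk]
  · rw [← map_mul]; simp
  · intro h
    have h := congrArg φ h
    rw [map_mul, RingEquiv.apply_symm_apply, map_zero, map_ofNat] at h
    have h := congrArg Prod.fst h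
    exact two u hu (by simpa using h)
  · intro h
    have h := congrArg φ h
    rw [map_mul, RingEquiv.apply_symm_apply, map_zero, map_ofNat] at h
    have h := congrArg Prod.snd h
    exact two v hv (by simpa using h)

/-- **Exact classification for residue rings (prime power / twice odd prime power
version).** For `n ≥ 2`, the affine group of `ℤ/nℤ` contains a cross-commuting
nonabelian square if and only if `n` is neither a prime power nor twice an odd prime
power. -/
theorem zmod_classification (n : ℕ) (hn : 2 ≤ n) :
    HasCrossCommutingNonabelianSquare (ZMod n) ↔
      (¬ ∃ p e : ℕ, p.Prime ∧ 1 ≤ e ∧ n = p ^ e) ∧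
      (¬ ∃ q e : ℕ, q.Prime ∧ Odd q ∧ 1 ≤ e ∧ n = 2 * q ^ e) := by
  constructor
  · intro h
    constructor
    · rintro ⟨p, e, hp, -, rfl⟩
      exact no_square_of_hom (RingHom.id _) (zmod_primePow_total p e hp)
        (fun _ _ _ _ h => h) h
    · rintro ⟨q, e, hq, ho, -, rfl⟩
      exact no_square_two_mul q e hq ho h
  · rintro ⟨h1, h2⟩
    rcases Nat.eq_two_pow_or_exists_odd_prime_and_dvd n with ⟨k, rfl⟩ | ⟨p, hp, hpn, ho⟩
    · refine absurd ⟨2, k, Nat.prime_two, ?_, rfl⟩ h1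
      rcases Nat.eq_zero_or_pos k with rfl | hk
      · norm_num at hn
      · exact hk
    · obtain ⟨e, m, hm, rfl⟩ := Nat.exists_eq_pow_mul_and_not_dvd (n := n) (by omega) p hp.ne_one
      have he : 1 ≤ e := by
        rcases Nat.eq_zero_or_pos e with rfl | hk
        · simp at hpn; exact absurd hpn hm
        · exact hk
      have hp3 : 3 ≤ p := by
        have := hp.two_le
        rcases ho with ⟨k, hk⟩
        omega
      apply square_of_coprime
      · exact hp3.trans (Nat.le_self_pow (by omega) p)
      · have m0 : m ≠ 0 := by rintro rfl; simp at hm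
        have m1 : m ≠ 1 := by rintro rfl; exact h1 ⟨p, e, hp, he, by ring⟩
        have m2 : m ≠ 2 := by rintro rfl; exact h2 ⟨p, e, hp, ho, he, by ring⟩
        omega
      · exact Nat.Coprime.pow_left _ ((Nat.Prime.coprime_iff_not_dvd hp).2 hm)
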